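/- arXiv:0803.1339 — 2 statements merged into one kernel-verified Lean document; each statement's English description precedes it below -/
import Mathlib

section
/- Let R = ℂ[x_{i,j}, ξ_{i,j} : 1 ≤ i < j ≤ n] be a commutative polynomial ring, extend indices by x_{j,i} = −x_{i,j}, ξ_{j,i} = −ξ_{i,j}, x_{i,i} = ξ_{i,i} = 0, and write X = (x_{i,j})_{i,j=1}^n and Ξ = (ξ_{i,j})_{i,j=1}^n for the corresponding alternating n×n matrices over R. For u ∈ ℂ let B(u) be the alternating 2n×2n matrix over R with block form [[X, u·J_n], [−u·J_n, −J_n Ξ J_n]]. Then Pf(B(u)) = Σ_{k=0}^{⌊n/2⌋} u^{n−2k} Σ_{I ⊆ {1,…,n}, |I|=2k} Pf(x_I)·Pf(ξ_I), where x_I = (x_{i,j})_{i,j∈I} and ξ_I = (ξ_{i,j})_{i,j∈I}. -/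
open Matrix MvPolynomial

noncomputable section

/-- Index set for entries with `i < j`. -/
abbrev Idx (n : ℕ) := {p : Fin n × Fin n // p.1 < p.2}

/-- Commutative polynomial ring `ℂ[x_{i,j}, ξ_{i,j} : i < j]`. -/
abbrev R (n : ℕ) := MvPolynomial (Idx n ⊕ Idx n) ℂ

/-- The generic alternating matrix `X = (x_{i,j})`. -/
def xMat (n : ℕ) : Matrix (Fin n) (Fin n) (R n) := Matrix.of fun i j =>
  if h : i < j then X (.inl ⟨(i, j), h⟩)
  else if h' : j < i then -X (.inl ⟨(j, i), h'⟩)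
  else 0

/-- The generic alternating matrix `Ξ = (ξ_{i,j})`. -/
def xiMat (n : ℕ) : Matrix (Fin n) (Fin n) (R n) := Matrix.of fun i j =>
  if h : i < j then X (.inr ⟨(i, j), h⟩)
  else if h' : j < i then -X (.inr ⟨(j, i), h'⟩)
  else 0

/-- Pfaffian of a `2m × 2m` matrix with entries in a `ℂ`-algebra
(`(1/(2^m m!))` times the sum over all of `S_{2m}`). -/
def Pf {A : Type*} [Ring A] [Algebra ℂ A] {m : ℕ} (B : Matrix (Fin (2 * m)) (Fin (2 * m)) A) :
    A :=
  (((2 : ℂ) ^ m * m.factorial)⁻¹) • ∑ σ : Equiv.Perm (Fin (2 * m)),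
    (Equiv.Perm.sign σ : ℤ) •
      (List.ofFn (fun i : Fin m =>
        B (σ ⟨2 * (i : ℕ), by have := i.isLt; omega⟩)
          (σ ⟨2 * (i : ℕ) + 1, by have := i.isLt; omega⟩))).prod

/-- The matrix `J_n` with 1's on the anti-diagonal. -/
def Jmat (A : Type*) [Zero A] [One A] (n : ℕ) : Matrix (Fin n) (Fin n) A :=
  Matrix.of fun i j => if (i : ℕ) + (j : ℕ) = n - 1 then 1 else 0

/-- Reindexing `Fin n ⊕ Fin n ≃ Fin (2*n)`. -/
def sumEquiv (n : ℕ) : (Fin n ⊕ Fin n) ≃ Fin (2 * n) :=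
  finSumFinEquiv.trans (finCongr (two_mul n).symm)

/-- The alternating matrix `B(u) = [[X, u·J_n], [−u·J_n, −J_n Ξ J_n]]` over `R`. -/
def Bmat (n : ℕ) (u : ℂ) : Matrix (Fin (2 * n)) (Fin (2 * n)) (R n) :=
  Matrix.reindex (sumEquiv n) (sumEquiv n)
    (Matrix.fromBlocks (xMat n) (u • Jmat (R n) n) (-(u • Jmat (R n) n))
      (-(Jmat (R n) n * xiMat n * Jmat (R n) n)))

/-!
For `w_1, …, w_{2m}` in a module, the degree-`m` term of `exp (∑_{a < b} M a b • w_a ∧ w_b)` is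
`Pf M • w_1 ∧ ⋯ ∧ w_{2m}`. In the basis `e_1, …, e_n, f_n, …, f_1` the bivector of `B(u)` is
`∑_{a < b} (x a b • e_a ∧ e_b - ξ a b • f_a ∧ f_b) + u • ∑ e_i ∧ f_i`. Bivectors commute, so its
exponential is the product of the exponentials of the three sums, and the third factor is
`∏ (1 + u • e_i ∧ f_i)` since each `e_i ∧ f_i` squares to zero. Choosing the term
`u • e_i ∧ f_i` for `i ∉ I` and `1` for `i ∈ I` kills every `e_a` and `f_a` with `a ∉ I` in the
other two factors, which then contribute `Pf x_I` and `Pf ξ_I`. Reading the `f_i` backwards turns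
`-ξ` into the antitranspose of `ξ`, which has the same Pfaffian, so that no sign remains.
-/

section Jmat

variable {A : Type*} {n : ℕ}

theorem Jmat_apply [Zero A] [One A] (i j : Fin n) : Jmat A n i j = if j = i.rev then 1 else 0 := by
  simp only [Jmat, of_apply, Fin.ext_iff, Fin.val_rev]
  exact if_congr (by lia) rfl rfl

theorem transpose_Jmat [Zero A] [One A] : (Jmat A n)ᵀ = Jmat A n := by
  ext i j
  simp only [transpose_apply, Jmat, of_apply, add_comm]

theorem Jmat_mul_mul_Jmat [NonAssocSemiring A] (M : Matrix (Fin n) (Fin n) A) :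
    Jmat A n * M * Jmat A n = M.submatrix Fin.rev Fin.rev := by
  ext i j
  simp [mul_apply, Jmat_apply, Fin.rev_eq_iff, eq_comm (a := j)]

end Jmat

section ExpSeries

variable {S : Type*} [CommRing S] [Algebra ℚ S]

/-- The power series `exp (t x) = ∑ₘ tᵐ xᵐ / m!` in the variable `t`. -/
def expSeries (x : S) : PowerSeries S := PowerSeries.rescale x (PowerSeries.exp S)

theorem coeff_expSeries (x : S) (m : ℕ) :
    PowerSeries.coeff m (expSeries x) = (m.factorial : ℚ)⁻¹ • x ^ m := by
  rw [expSeries, PowerSeries.coeff_rescale, PowerSeries.coeff_exp, one_div, mul_comm,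
    Algebra.smul_def]

theorem expSeries_add (x y : S) : expSeries (x + y) = expSeries x * expSeries y :=
  (PowerSeries.exp_mul_exp_eq_exp_add x y).symm

theorem expSeries_sum {κ : Type*} (s : Finset κ) (a : κ → S) :
    expSeries (∑ i ∈ s, a i) = ∏ i ∈ s, expSeries (a i) := by
  classical
  induction s using Finset.induction_on with
  | empty => simp [expSeries]
  | insert i s hi ih => rw [Finset.sum_insert hi, Finset.prod_insert hi, expSeries_add, ih]

theorem expSeries_of_mul_self_eq_zero {x : S} (hx : x * x = 0) :
    expSeries x = 1 + PowerSeries.X * PowerSeries.C x := by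
  ext m
  match m with
  | 0 => simp [coeff_expSeries]
  | 1 => simp [coeff_expSeries, PowerSeries.coeff_one]
  | m + 2 =>
    have hx2 : x ^ (m + 2) = 0 := by rw [pow_add, pow_two, hx, mul_zero]
    rw [coeff_expSeries, hx2, smul_zero, map_add, PowerSeries.coeff_one, if_neg (by omega),
      mul_comm, PowerSeries.coeff_succ_mul_X, PowerSeries.coeff_C, if_neg (by omega), add_zero]

theorem expSeries_sum_of_mul_self_eq_zero {κ : Type*} {s : Finset κ} {a : κ → S}
    (ha : ∀ i ∈ s, a i * a i = 0) :
    expSeries (∑ i ∈ s, a i) =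
      ∑ T ∈ s.powerset, PowerSeries.X ^ T.card * PowerSeries.C (∏ i ∈ T, a i) := by
  rw [expSeries_sum, Finset.prod_congr rfl fun i hi => expSeries_of_mul_self_eq_zero (ha i hi),
    Finset.prod_one_add]
  simp only [Finset.prod_mul_distrib, Finset.prod_const, map_prod]

theorem mul_coeff_expSeries_congr {p x y : S} (h : p * x = p * y) (m : ℕ) :
    p * PowerSeries.coeff m (expSeries x) = p * PowerSeries.coeff m (expSeries y) := by
  have hpow : p * x ^ m = p * y ^ m := by
    induction m with
    | zero => simp
    | succ m ih => rw [pow_succ, ← mul_assoc, ih, mul_right_comm, h, pow_succ]; ring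
  rw [coeff_expSeries, coeff_expSeries, mul_smul_comm, mul_smul_comm, hpow]

end ExpSeries

section Wedge

open ExteriorAlgebra

variable {A : Type*} [CommRing A] {V : Type*} [AddCommGroup V] [Module A V]

/-- The centre of the exterior algebra: a commutative algebra that contains all bivectors. A type
synonym of the corresponding subalgebra, so that all of its structure derives from one `CommRing`
instance. -/
def ExteriorCenter (A V : Type*) [CommRing A] [AddCommGroup V] [Module A V] : Type _ :=
  Subalgebra.center A (ExteriorAlgebra A V)

namespace ExteriorCenter

instance : CommRing (ExteriorCenter A V) :=
  inferInstanceAs (CommRing (Subalgebra.center A (ExteriorAlgebra A V)))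

instance : Algebra A (ExteriorCenter A V) :=
  inferInstanceAs (Algebra A (Subalgebra.center A (ExteriorAlgebra A V)))

instance [Algebra ℚ A] : Algebra ℚ (ExteriorCenter A V) :=
  ((algebraMap A (ExteriorCenter A V)).comp (algebraMap ℚ A)).toAlgebra

/-- The inclusion of the centre into the exterior algebra. -/
def val : ExteriorCenter A V →ₐ[A] ExteriorAlgebra A V :=
  (Subalgebra.center A (ExteriorAlgebra A V)).val

theorem val_injective : Function.Injective (val (A := A) (V := V)) :=
  Subtype.val_injective

theorem mul_val_comm (x : ExteriorAlgebra A V) (z : ExteriorCenter A V) :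
    x * val z = val z * x :=
  Subalgebra.mem_center_iff.1 z.2 x

end ExteriorCenter

open ExteriorCenter

theorem ι_mul_ι_anticomm (v w : V) : ι A v * ι A w = -(ι A w * ι A v) :=
  eq_neg_of_add_eq_zero_left (ι_add_mul_swap v w)

theorem ι_mul_ι_mem_center (v w : V) :
    ι A v * ι A w ∈ Subalgebra.center A (ExteriorAlgebra A V) := by
  rw [Subalgebra.mem_center_iff]
  intro x
  induction x using ExteriorAlgebra.induction with
  | algebraMap r => exact Algebra.commutes _ _
  | ι z =>
    rw [← mul_assoc, ι_mul_ι_anticomm z v, neg_mul, mul_assoc, ι_mul_ι_anticomm z w, mul_neg,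
      neg_neg, mul_assoc]
  | mul x y hx hy => rw [mul_assoc, hy, ← mul_assoc, hx, mul_assoc]
  | add x y hx hy => rw [add_mul, mul_add, hx, hy]

/-- The bivector `v ∧ w`, as a central element of the exterior algebra. -/
def wedge (v w : V) : ExteriorCenter A V := ⟨ι A v * ι A w, ι_mul_ι_mem_center v w⟩

theorem val_wedge (v w : V) : val (wedge v w) = ι A v * ι A w := rfl

theorem wedge_anticomm (v w : V) : (wedge v w : ExteriorCenter A V) = -wedge w v :=
  val_injective (ι_mul_ι_anticomm v w)

theorem wedge_mul_wedge_right (u v w : V) :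
    (wedge u v : ExteriorCenter A V) * wedge v w = 0 := by
  apply val_injective
  rw [map_mul, val_wedge, val_wedge, mul_assoc, ← mul_assoc (ι A v), ι_sq_zero, zero_mul,
    mul_zero, map_zero]

theorem wedge_mul_wedge_left (u v w : V) :
    (wedge u v : ExteriorCenter A V) * wedge u w = 0 := by
  rw [wedge_anticomm u v, neg_mul, wedge_mul_wedge_right, neg_zero]

theorem ιMulti_succ_apply_last {k : ℕ} (v : Fin (k + 1) → V) :
    ιMulti A (k + 1) v = ιMulti A k (v ∘ Fin.castSucc) * ι A (v (Fin.last k)) := by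
  simp only [ιMulti_apply, List.ofFn_succ', List.concat_eq_append, List.prod_append,
    List.prod_singleton, Function.comp_def]

theorem val_prod_wedge_pairs {m : ℕ} (v : Fin (2 * m) → V) :
    val (∏ i : Fin m, wedge (v ⟨2 * i, by omega⟩) (v ⟨2 * i + 1, by omega⟩)) =
      ιMulti A (2 * m) v := by
  induction m with
  | zero => simp
  | succ m ih =>
    change _ = ιMulti A (2 * m + 1 + 1) v
    rw [ιMulti_succ_apply, ιMulti_succ_apply, ← mul_assoc, Fin.prod_univ_succ, map_mul]
    exact congrArg _ (ih (vecTail (vecTail v)))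

theorem val_prod_wedge {k : ℕ} (w z : Fin k → V) :
    val (∏ i, wedge (w i) (z i)) = ιMulti A k w * ιMulti A k (z ∘ Fin.rev) := by
  induction k with
  | zero => simp
  | succ k ih =>
    have hcastSucc : (z ∘ Fin.rev) ∘ Fin.castSucc = vecTail z ∘ Fin.rev :=
      funext fun i => congrArg z (Fin.rev_castSucc i)
    calc
      val (∏ i, wedge (w i) (z i))
          = ι A (w 0) * ι A (z 0) * val (∏ i, wedge (vecTail w i) (vecTail z i)) := by
        rw [Fin.prod_univ_succ, map_mul, val_wedge]; rfl
      _ = ι A (w 0) * (ιMulti A k (vecTail w) * ιMulti A k (vecTail z ∘ Fin.rev)) * ι A (z 0) := by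
        rw [mul_assoc, mul_val_comm, ih, ← mul_assoc]
      _ = ιMulti A (k + 1) w * ιMulti A (k + 1) (z ∘ Fin.rev) := by
        rw [ιMulti_succ_apply, ιMulti_succ_apply_last, hcastSucc, Function.comp_apply, Fin.rev_last]
        simp only [mul_assoc]

section TwoForm

variable [Algebra ℚ A] {κ κ' : Type*} [Fintype κ] [Fintype κ']

/-- The bivector `½ ∑ M a b • (w a ∧ w b)`, which is `∑_{a < b} M a b • (w a ∧ w b)` when `M` is
alternating. -/
def twoForm (w : κ → V) (M : Matrix κ κ A) : ExteriorCenter A V :=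
  (2⁻¹ : ℚ) • ∑ a, ∑ b, M a b • wedge (w a) (w b)

theorem twoForm_reindex (e : κ ≃ κ') (w : κ' → V) (M : Matrix κ κ A) :
    twoForm w (M.reindex e e) = twoForm (w ∘ e) M := by
  simp only [twoForm, ← Fintype.sum_prod_type']
  exact congrArg _ (Fintype.sum_equiv (e.prodCongr e) _ _ fun p => by simp).symm

theorem twoForm_neg (w : κ → V) (M : Matrix κ κ A) : twoForm w (-M) = twoForm w Mᵀ := by
  rw [twoForm, twoForm, Finset.sum_comm]
  refine congrArg _ (Finset.sum_congr rfl fun a _ => Finset.sum_congr rfl fun b _ => ?_)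
  rw [neg_apply, transpose_apply, wedge_anticomm, smul_neg, neg_smul, neg_neg]

theorem twoForm_fromBlocks (w : κ ⊕ κ' → V) (P : Matrix κ κ A) (Q : Matrix κ κ' A)
    (T : Matrix κ' κ' A) :
    twoForm w (fromBlocks P Q (-Qᵀ) T) = twoForm (w ∘ Sum.inl) P + twoForm (w ∘ Sum.inr) T +
      ∑ a, ∑ b, Q a b • wedge (w (Sum.inl a)) (w (Sum.inr b)) := by
  have hlower : ∑ b, ∑ a, (-Qᵀ) b a • wedge (w (Sum.inr b)) (w (Sum.inl a)) =
      ∑ a, ∑ b, Q a b • (wedge (w (Sum.inl a)) (w (Sum.inr b)) : ExteriorCenter A V) := by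
    rw [Finset.sum_comm]
    refine Finset.sum_congr rfl fun a _ => Finset.sum_congr rfl fun b _ => ?_
    rw [neg_apply, transpose_apply, wedge_anticomm, neg_smul, smul_neg, neg_neg]
  simp only [twoForm, Fintype.sum_sum_type, fromBlocks_apply₁₁, fromBlocks_apply₁₂,
    fromBlocks_apply₂₁, fromBlocks_apply₂₂, Finset.sum_add_distrib, hlower, Function.comp_apply]
  module

theorem mul_twoForm_eq_of_injective {f : κ' → κ} (hf : f.Injective) {p : ExteriorCenter A V}
    {w : κ → V} (hp : ∀ a ∉ Set.range f, ∀ v, p * wedge (w a) v = 0) (M : Matrix κ κ A) :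
    p * twoForm w M = p * twoForm (w ∘ f) (M.submatrix f f) := by
  have hp' : ∀ b ∉ Set.range f, ∀ v, p * wedge v (w b) = 0 := fun b hb v => by
    rw [wedge_anticomm, mul_neg, hp b hb, neg_zero]
  simp only [twoForm, mul_smul_comm, Finset.mul_sum]
  congr 1
  refine (Fintype.sum_of_injective f hf _ _ (fun a ha => ?_) fun a => ?_).symm
  · simp only [hp a ha, smul_zero, Finset.sum_const_zero]
  · exact Fintype.sum_of_injective f hf _ _ (fun b hb => by rw [hp' b hb, smul_zero]) fun _ => rfl

end TwoForm

section Pfaffian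

/-- Splitting a sequence of even length into consecutive pairs. -/
def pairsEquiv (κ : Type*) (m : ℕ) : (Fin (2 * m) → κ) ≃ (Fin m → κ × κ) :=
  ((finProdFinEquiv.trans (finCongr (mul_comm m 2))).symm.arrowCongr (Equiv.refl κ)).trans
    ((Equiv.curry _ _ _).trans ((Equiv.refl _).arrowCongr (finTwoArrowEquiv κ)))

theorem pairsEquiv_apply {κ : Type*} {m : ℕ} (g : Fin (2 * m) → κ) (i : Fin m) :
    pairsEquiv κ m g i = (g ⟨2 * i, by omega⟩, g ⟨2 * i + 1, by omega⟩) := by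
  refine Prod.ext (congrArg g (Fin.ext ?_)) (congrArg g (Fin.ext ?_))
  · simp [finProdFinEquiv]
  · simp [finProdFinEquiv]; omega

theorem val_sum_smul_wedge_pow {κ : Type*} [Fintype κ] (w : κ → V) (M : Matrix κ κ A) (m : ℕ) :
    val ((∑ a, ∑ b, M a b • wedge (w a) (w b)) ^ m) = ∑ g : Fin (2 * m) → κ,
      (∏ i : Fin m, M (g ⟨2 * i, by omega⟩) (g ⟨2 * i + 1, by omega⟩)) •
        ιMulti A (2 * m) (w ∘ g) := by
  classical
  rw [← Fintype.sum_prod_type', Fintype.sum_pow, ← (pairsEquiv κ m).sum_comp, map_sum]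
  refine Finset.sum_congr rfl fun g _ => ?_
  simp only [pairsEquiv_apply, Finset.prod_smul, map_smul]
  exact congrArg _ (val_prod_wedge_pairs (w ∘ g))

theorem sum_perm_eq_smul_Pf [Algebra ℂ A] {m : ℕ} (M : Matrix (Fin (2 * m)) (Fin (2 * m)) A) :
    ∑ σ : Equiv.Perm (Fin (2 * m)), (σ.sign : ℤ) •
      ∏ i : Fin m, M (σ ⟨2 * i, by omega⟩) (σ ⟨2 * i + 1, by omega⟩) =
        (2 ^ m * m.factorial) • Pf M := by
  have hne : (2 ^ m * m.factorial : ℂ) ≠ 0 :=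
    mul_ne_zero (pow_ne_zero _ two_ne_zero) (Nat.cast_ne_zero.2 m.factorial_ne_zero)
  rw [← Nat.cast_smul_eq_nsmul ℂ]
  simp only [Pf, List.prod_ofFn, Nat.cast_mul, Nat.cast_pow, Nat.cast_ofNat, smul_inv_smul₀ hne]

theorem val_sum_smul_wedge_pow_eq_Pf [Algebra ℂ A] {m : ℕ} (w : Fin (2 * m) → V)
    (M : Matrix (Fin (2 * m)) (Fin (2 * m)) A) :
    val ((∑ a, ∑ b, M a b • wedge (w a) (w b)) ^ m) =
      (2 ^ m * m.factorial) • Pf M • ιMulti A (2 * m) w := by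
  rw [val_sum_smul_wedge_pow, ← smul_assoc, ← sum_perm_eq_smul_Pf, Finset.sum_smul]
  refine (Fintype.sum_of_injective (fun σ : Equiv.Perm (Fin (2 * m)) => ⇑σ) DFunLike.coe_injective
    _ _ (fun g hg => ?_) fun σ => ?_).symm
  · rw [ιMulti_eq_zero_of_not_inj, smul_zero]
    exact fun h => hg ⟨Equiv.ofBijective g (Finite.injective_iff_bijective.1 h.of_comp), rfl⟩
  · rw [AlternatingMap.map_perm, smul_assoc, smul_comm]
    rfl

theorem val_coeff_expSeries_twoForm [Algebra ℂ A] [Algebra ℚ A] {m : ℕ} (w : Fin (2 * m) → V)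
    (M : Matrix (Fin (2 * m)) (Fin (2 * m)) A) :
    val (PowerSeries.coeff m (expSeries (twoForm w M))) = Pf M • ιMulti A (2 * m) w := by
  have hcancel : (m.factorial : ℚ)⁻¹ * 2⁻¹ ^ m * ((2 ^ m * m.factorial : ℕ) : ℚ) = 1 := by
    have : (m.factorial : ℚ) ≠ 0 := Nat.cast_ne_zero.2 m.factorial_ne_zero
    push_cast
    rw [inv_pow]
    field_simp
  rw [coeff_expSeries, twoForm, smul_pow, smul_smul, ← algebraMap_smul A, map_smul,
    val_sum_smul_wedge_pow_eq_Pf, ← Nat.cast_smul_eq_nsmul A, smul_smul,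
    ← map_natCast (algebraMap ℚ A), ← map_mul, hcancel, map_one, one_smul]

theorem coeff_expSeries_twoForm_eq_zero_of_lt [Algebra ℚ A] {N m : ℕ} (h : N < 2 * m)
    (w : Fin N → V) (M : Matrix (Fin N) (Fin N) A) :
    PowerSeries.coeff m (expSeries (twoForm w M)) = 0 := by
  have hpow : (∑ a, ∑ b, M a b • wedge (w a) (w b)) ^ m = (0 : ExteriorCenter A V) := by
    apply val_injective
    rw [val_sum_smul_wedge_pow, map_zero]
    refine Finset.sum_eq_zero fun g _ => ?_
    rw [ιMulti_eq_zero_of_not_inj, smul_zero]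
    exact fun hg => absurd (Fintype.card_le_of_injective g hg.of_comp) (by simpa using h)
  rw [coeff_expSeries, twoForm, smul_pow, hpow, smul_zero, smul_zero]

theorem Pf_antitranspose [Algebra ℂ A] {m : ℕ} (M : Matrix (Fin (2 * m)) (Fin (2 * m)) A) :
    Pf (Mᵀ.submatrix Fin.rev Fin.rev) = Pf M := by
  simp only [Pf, List.prod_ofFn]
  congr 1
  refine Fintype.sum_equiv Fin.revPerm.permCongr _ _ fun σ => ?_
  rw [Equiv.Perm.sign_permCongr]
  congr 1
  refine Fintype.prod_equiv Fin.revPerm _ _ fun i => ?_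
  have h (j : Fin (2 * m)) : Fin.revPerm.permCongr σ j = (σ j.rev).rev := rfl
  rw [h, h, submatrix_apply, transpose_apply]
  congr 3 <;> ext <;> simp <;> omega

theorem coeff_expSeries_twoForm_add_twoForm [Algebra ℂ A] [Algebra ℚ A] {k : ℕ}
    (w z : Fin (2 * k) → V) (P Q : Matrix (Fin (2 * k)) (Fin (2 * k)) A) :
    PowerSeries.coeff (2 * k) (expSeries (twoForm w P + twoForm z Qᵀ)) =
      (Pf P * Pf Q) • ∏ i, wedge (w i) (z i) := by
  have hz : twoForm z Qᵀ = twoForm (z ∘ Fin.rev) (Qᵀ.submatrix Fin.rev Fin.rev) := by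
    have hrev : (z ∘ Fin.rev) ∘ Fin.revPerm = z := funext fun i => congrArg z i.rev_rev
    rw [← hrev, ← twoForm_reindex, hrev]
    rfl
  rw [expSeries_add, PowerSeries.coeff_mul, Finset.sum_eq_single (k, k)]
  · apply val_injective
    rw [map_mul, val_coeff_expSeries_twoForm, hz, val_coeff_expSeries_twoForm, Pf_antitranspose,
      smul_mul_smul_comm, map_smul, val_prod_wedge]
  · rintro ⟨a, b⟩ hab hne
    rw [Finset.HasAntidiagonal.mem_antidiagonal] at hab
    obtain h | h : k < a ∨ k < b := by
      by_contra! h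
      exact hne (Prod.ext (by lia) (by lia))
    · rw [coeff_expSeries_twoForm_eq_zero_of_lt (by lia), zero_mul]
    · rw [coeff_expSeries_twoForm_eq_zero_of_lt (m := b) (by lia), mul_zero]
  · exact fun h => absurd (Finset.HasAntidiagonal.mem_antidiagonal.2 (two_mul k).symm) h

theorem coeff_expSeries_twoForm_add_twoForm_eq_zero_of_odd [Algebra ℚ A] {q : ℕ} (hq : Odd q)
    (w z : Fin q → V) (P Q : Matrix (Fin q) (Fin q) A) :
    PowerSeries.coeff q (expSeries (twoForm w P + twoForm z Q)) = 0 := by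
  rw [expSeries_add, PowerSeries.coeff_mul]
  refine Finset.sum_eq_zero fun ⟨a, b⟩ hab => ?_
  rw [Finset.HasAntidiagonal.mem_antidiagonal] at hab
  obtain ⟨r, rfl⟩ := hq
  obtain h | h : r < a ∨ r < b := by lia
  · rw [coeff_expSeries_twoForm_eq_zero_of_lt (by lia), zero_mul]
  · rw [coeff_expSeries_twoForm_eq_zero_of_lt (m := b) (by lia), mul_zero]

theorem prod_wedge_mul_wedge_left {κ : Type*} {s : Finset κ} {a : κ} (ha : a ∈ s) (w z : κ → V)
    (v : V) : (∏ j ∈ s, wedge (w j) (z j) : ExteriorCenter A V) * wedge (w a) v = 0 := by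
  classical
  rw [← Finset.prod_erase_mul s _ ha, mul_assoc, wedge_mul_wedge_left, mul_zero]

theorem prod_wedge_mul_wedge_right {κ : Type*} {s : Finset κ} {a : κ} (ha : a ∈ s) (w z : κ → V)
    (v : V) : (∏ j ∈ s, wedge (w j) (z j) : ExteriorCenter A V) * wedge (z a) v = 0 := by
  classical
  rw [← Finset.prod_erase_mul s _ ha, mul_assoc, wedge_mul_wedge_right, mul_zero]

theorem prod_wedge_mul_coeff_expSeries [Algebra ℚ A] {κ κ' : Type*} [Fintype κ] [Fintype κ']
    {f : κ' → κ} (hf : f.Injective) {s : Finset κ} (hs : ∀ a ∉ Set.range f, a ∈ s)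
    (w z : κ → V) (P Q : Matrix κ κ A) (m : ℕ) :
    (∏ j ∈ s, wedge (w j) (z j)) *
        PowerSeries.coeff m (expSeries (twoForm w P + twoForm z Q)) =
      (∏ j ∈ s, wedge (w j) (z j)) * PowerSeries.coeff m
        (expSeries (twoForm (w ∘ f) (P.submatrix f f) + twoForm (z ∘ f) (Q.submatrix f f))) := by
  apply mul_coeff_expSeries_congr
  rw [mul_add, mul_add,
    mul_twoForm_eq_of_injective hf fun a ha => prod_wedge_mul_wedge_left (hs a ha) w z,
    mul_twoForm_eq_of_injective hf fun a ha => prod_wedge_mul_wedge_right (hs a ha) w z]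

section PfMinor

variable [Algebra ℂ A] {n : ℕ}

/-- The Pfaffian of the principal submatrix of `M` with rows and columns in `I`, which is `0` by
convention when `I` has an odd number of elements. -/
def pfMinor (M : Matrix (Fin n) (Fin n) A) (I : Finset (Fin n)) : A :=
  if h : I.card = 2 * (I.card / 2) then
    Pf (M.submatrix (I.orderEmbOfFin h) (I.orderEmbOfFin h))
  else 0

theorem pfMinor_of_card_eq (M : Matrix (Fin n) (Fin n) A) {I : Finset (Fin n)} {k : ℕ}
    (h : I.card = 2 * k) :
    pfMinor M I = Pf (M.submatrix (I.orderEmbOfFin h) (I.orderEmbOfFin h)) := by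
  obtain rfl : k = I.card / 2 := by lia
  exact dif_pos h

theorem pfMinor_of_odd_card (M : Matrix (Fin n) (Fin n) A) {I : Finset (Fin n)}
    (h : Odd I.card) : pfMinor M I = 0 :=
  dif_neg (by grind)

theorem prod_compl_wedge_mul_coeff_expSeries [Algebra ℚ A] (w z : Fin n → V)
    (P Q : Matrix (Fin n) (Fin n) A) (I : Finset (Fin n)) :
    (∏ j ∈ Iᶜ, wedge (w j) (z j)) *
        PowerSeries.coeff I.card (expSeries (twoForm w P + twoForm z Qᵀ)) =
      (pfMinor P I * pfMinor Q I) • ∏ j, wedge (w j) (z j) := by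
  have hcompl {q : ℕ} (h : I.card = q) : ∀ a ∉ Set.range (I.orderEmbOfFin h), a ∈ Iᶜ :=
    fun a ha => by simpa using ha
  rcases I.card.even_or_odd' with ⟨k, h | h⟩
  · have hprod : ∏ i, wedge (w (I.orderEmbOfFin h i)) (z (I.orderEmbOfFin h i)) =
        ∏ j ∈ I, (wedge (w j) (z j) : ExteriorCenter A V) := by
      rw [← Finset.prod_image (f := fun j => wedge (w j) (z j))
        ((I.orderEmbOfFin h).injective.injOn), Finset.image_orderEmbOfFin_univ]
    rw [h, prod_wedge_mul_coeff_expSeries (I.orderEmbOfFin h).injective (hcompl h),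
      ← transpose_submatrix, coeff_expSeries_twoForm_add_twoForm, mul_smul_comm,
      pfMinor_of_card_eq P h, pfMinor_of_card_eq Q h]
    simp only [Function.comp_apply]
    rw [hprod, Finset.prod_compl_mul_prod]
  · rw [h, prod_wedge_mul_coeff_expSeries (I.orderEmbOfFin h).injective (hcompl h),
      coeff_expSeries_twoForm_add_twoForm_eq_zero_of_odd (odd_two_mul_add_one k), mul_zero,
      pfMinor_of_odd_card P (h ▸ odd_two_mul_add_one k), zero_mul, zero_smul]

theorem coeff_expSeries_twoForm_add_twoForm_add_sum [Algebra ℚ A] (w z : Fin n → V)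
    (P Q : Matrix (Fin n) (Fin n) A) (u : A) :
    PowerSeries.coeff n
        (expSeries (twoForm w P + twoForm z Qᵀ + ∑ i, u • wedge (w i) (z i))) =
      (∑ I : Finset (Fin n), u ^ (n - I.card) * (pfMinor P I * pfMinor Q I)) •
        ∏ i, wedge (w i) (z i) := by
  have hsq (i : Fin n) :
      (u • wedge (w i) (z i) : ExteriorCenter A V) * (u • wedge (w i) (z i)) = 0 := by
    rw [smul_mul_smul_comm, wedge_mul_wedge_left, smul_zero]
  rw [expSeries_add, expSeries_sum_of_mul_self_eq_zero fun i _ => hsq i, Finset.powerset_univ,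
    Finset.mul_sum, map_sum, Finset.sum_smul]
  have hterm (I : Finset (Fin n)) :
      PowerSeries.coeff n (expSeries (twoForm w P + twoForm z Qᵀ) *
          (PowerSeries.X ^ Iᶜ.card * PowerSeries.C (∏ i ∈ Iᶜ, u • wedge (w i) (z i)))) =
        (u ^ (n - I.card) * (pfMinor P I * pfMinor Q I)) • ∏ i, wedge (w i) (z i) := by
    have hI : I.card ≤ n := by simpa using I.card_le_univ
    have hcard : Iᶜ.card = n - I.card := by rw [Finset.card_compl, Fintype.card_fin]
    rw [mul_left_comm, PowerSeries.coeff_X_pow_mul', if_pos (hcard.trans_le (n.sub_le _)), hcard,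
      Nat.sub_sub_self hI, PowerSeries.coeff_mul_C, Finset.prod_smul, Finset.prod_const, hcard,
      mul_smul_comm, mul_comm (PowerSeries.coeff _ _), prod_compl_wedge_mul_coeff_expSeries,
      smul_smul]
  exact (Fintype.sum_bijective (·ᶜ) compl_bijective _ _ fun I => (hterm I).symm).symm

theorem sum_pfMinor_mul_pfMinor (P Q : Matrix (Fin n) (Fin n) A) (c : ℕ → A) :
    ∑ I : Finset (Fin n), c I.card * (pfMinor P I * pfMinor Q I) =
      ∑ k ∈ Finset.range (n / 2 + 1), c (2 * k) *
        ∑ I : {I : Finset (Fin n) // I.card = 2 * k}, pfMinor P I * pfMinor Q I := by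
  have hsingle (I : Finset (Fin n)) : c I.card * (pfMinor P I * pfMinor Q I) =
      ∑ k ∈ Finset.range (n / 2 + 1),
        if I.card = 2 * k then c (2 * k) * (pfMinor P I * pfMinor Q I) else 0 := by
    have hI : I.card ≤ n := by simpa using I.card_le_univ
    rcases I.card.even_or_odd' with ⟨r, h | h⟩
    · rw [Finset.sum_eq_single_of_mem r (Finset.mem_range.2 (by lia))
        fun k _ hk => if_neg (by lia), if_pos h, h]
    · rw [pfMinor_of_odd_card P (h ▸ odd_two_mul_add_one r)]
      simp
  rw [Finset.sum_congr rfl fun I _ => hsingle I, Finset.sum_comm]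
  refine Finset.sum_congr rfl fun k _ => ?_
  rw [← Finset.sum_filter, ← Finset.mul_sum]
  exact congrArg _ (Finset.sum_subtype _ (by simp) _)

end PfMinor

end Pfaffian

section Block

variable {n : ℕ}

theorem twoForm_fromBlocks_Jmat [Algebra ℚ A] (w : Fin n ⊕ Fin n → V)
    (P Q : Matrix (Fin n) (Fin n) A) (u : A) :
    twoForm w (fromBlocks P (u • Jmat A n) (-(u • Jmat A n)) (-(Jmat A n * Q * Jmat A n))) =
      twoForm (w ∘ Sum.inl) P + twoForm (w ∘ Sum.inr ∘ Fin.rev) Qᵀ +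
        ∑ i, u • wedge (w (Sum.inl i)) (w (Sum.inr i.rev)) := by
  have hlower : twoForm (w ∘ Sum.inr) (-(Jmat A n * Q * Jmat A n)) =
      twoForm (w ∘ Sum.inr ∘ Fin.rev) Qᵀ := by
    rw [twoForm_neg, Jmat_mul_mul_Jmat]
    exact twoForm_reindex Fin.revPerm (w ∘ Sum.inr) Qᵀ
  have hoff : -(u • Jmat A n) = -(u • Jmat A n)ᵀ := by rw [transpose_smul, transpose_Jmat]
  rw [hoff, twoForm_fromBlocks, hlower]
  simp [Jmat_apply]

theorem ιMulti_eq_val_prod_wedge (v : Fin (2 * n) → V) :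
    ιMulti A (2 * n) v = val (∏ i, wedge (v (sumEquiv n (Sum.inl i)))
      (v (sumEquiv n (Sum.inr i.rev)))) := by
  rw [val_prod_wedge, ιMulti_mul_ιMulti, ιMulti_apply, ιMulti_apply, List.ofFn_congr (two_mul n)]
  congr 2
  funext i
  refine Fin.addCases (fun i => ?_) (fun i => ?_) i
  · simp [sumEquiv]
  · rw [Fin.append_right]
    simp [sumEquiv]

theorem smul_ιMulti_basis_injective {N : ℕ} (b : Module.Basis (Fin N) A V) :
    Function.Injective fun a : A => a • ιMulti A N b := by
  refine Function.LeftInverse.injective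
    (g := liftAlternating (R := A) (Pi.single N b.det)) fun a => ?_
  rw [map_smul, liftAlternating_apply_ιMulti, Pi.single_eq_same, b.det_self, smul_eq_mul, mul_one]

theorem Pf_fromBlocks_Jmat [Algebra ℂ A] (P Q : Matrix (Fin n) (Fin n) A) (u : A) :
    Pf (reindex (sumEquiv n) (sumEquiv n)
      (fromBlocks P (u • Jmat A n) (-(u • Jmat A n)) (-(Jmat A n * Q * Jmat A n)))) =
    ∑ I : Finset (Fin n), u ^ (n - I.card) * (pfMinor P I * pfMinor Q I) := by
  let _ : Algebra ℚ A := Algebra.compHom A (algebraMap ℚ ℂ)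
  let b := Pi.basisFun A (Fin (2 * n))
  apply smul_ιMulti_basis_injective b
  beta_reduce
  rw [← val_coeff_expSeries_twoForm, twoForm_reindex, twoForm_fromBlocks_Jmat,
    ιMulti_eq_val_prod_wedge, ← map_smul]
  exact congrArg val (coeff_expSeries_twoForm_add_twoForm_add_sum (b ∘ sumEquiv n ∘ Sum.inl)
    (b ∘ sumEquiv n ∘ Sum.inr ∘ Fin.rev) P Q u)

end Block

end Wedge

theorem Pf_Bmat_general {A : Type*} [CommRing A] [Algebra ℂ A] (n : ℕ)
    (P Q : Matrix (Fin n) (Fin n) A) (u : A) :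
    Pf (reindex (sumEquiv n) (sumEquiv n)
      (fromBlocks P (u • Jmat A n) (-(u • Jmat A n)) (-(Jmat A n * Q * Jmat A n)))) =
      ∑ k ∈ Finset.range (n / 2 + 1),
        u ^ (n - 2 * k) *
          ∑ I : {I : Finset (Fin n) // I.card = 2 * k},
            Pf (Matrix.of fun a b : Fin (2 * k) =>
                P (I.1.orderIsoOfFin I.2 a) (I.1.orderIsoOfFin I.2 b)) *
              Pf (Matrix.of fun a b : Fin (2 * k) =>
                Q (I.1.orderIsoOfFin I.2 a) (I.1.orderIsoOfFin I.2 b)) := by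
  rw [Pf_fromBlocks_Jmat, sum_pfMinor_mul_pfMinor P Q fun c => u ^ (n - c)]
  refine Finset.sum_congr rfl fun k _ => congrArg _ (Finset.sum_congr rfl fun I _ => ?_)
  rw [pfMinor_of_card_eq P I.2, pfMinor_of_card_eq Q I.2]
  rfl

/-- `Pf(B(u)) = Σ_{k=0}^{⌊n/2⌋} u^{n−2k} Σ_{|I|=2k} Pf(x_I) Pf(ξ_I)`. -/
theorem Pf_Bmat (n : ℕ) (u : ℂ) :
    Pf (Bmat n u) =
      ∑ k ∈ Finset.range (n / 2 + 1),
        u ^ (n - 2 * k) •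
          ∑ I : {I : Finset (Fin n) // I.card = 2 * k},
            Pf (Matrix.of fun a b : Fin (2 * k) =>
                xMat n (I.1.orderIsoOfFin I.2 a) (I.1.orderIsoOfFin I.2 b)) *
              Pf (Matrix.of fun a b : Fin (2 * k) =>
                xiMat n (I.1.orderIsoOfFin I.2 a) (I.1.orderIsoOfFin I.2 b)) := by
  simpa only [Bmat, ← map_pow, ← Algebra.smul_def, algebraMap_smul] using
    Pf_Bmat_general n (xMat n) (xiMat n) (algebraMap ℂ (R n) u)

end
end

section
/- For every g ∈ GL_n(ℂ) and every 0 ≤ k ≤ ⌊n/2⌋, the operator Γ_k is GL_n-invariant: π(g) ∘ Γ_k ∘ π(g)⁻¹ = Γ_k in End(P). -/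
open Matrix MvPolynomial

noncomputable section

/-- Polynomial algebra on the space of alternating `n × n` matrices. -/
abbrev P (n : ℕ) := MvPolynomial (Idx n) ℂ

/-- Multiplication operator `M_{i,j}` (with `M_{j,i} = -M_{i,j}`, `M_{i,i} = 0`). -/
def Mop (n : ℕ) (i j : Fin n) : Module.End ℂ (P n) :=
  if h : i < j then LinearMap.mulLeft ℂ (X ⟨(i, j), h⟩)
  else if h' : j < i then -LinearMap.mulLeft ℂ (X ⟨(j, i), h'⟩ : P n)
  else 0

/-- Derivation `D_{i,j} = ∂/∂x_{i,j}` (with `D_{j,i} = -D_{i,j}`, `D_{i,i} = 0`). -/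
def Dop (n : ℕ) (i j : Fin n) : Module.End ℂ (P n) :=
  if h : i < j then ((pderiv ⟨(i, j), h⟩ : Derivation ℂ (P n) (P n)) : P n →ₗ[ℂ] P n)
  else if h' : j < i then -((pderiv ⟨(j, i), h'⟩ : Derivation ℂ (P n) (P n)) : P n →ₗ[ℂ] P n)
  else 0

/-- The generic alternating matrix with entries in `P n`. -/
def genMat (n : ℕ) : Matrix (Fin n) (Fin n) (P n) := Matrix.of fun i j =>
  if h : i < j then X ⟨(i, j), h⟩
  else if h' : j < i then -X ⟨(j, i), h'⟩
  else 0

/-- The representation `π(g)` of `GL n ℂ` on `P n`, sending `x_{i,j}` to the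
`(i,j)`-entry of `g⁻¹ x ᵗ(g⁻¹)`. -/
def piHom (n : ℕ) (g : GL (Fin n) ℂ) : P n →ₐ[ℂ] P n :=
  aeval fun v : Idx n =>
    ((((g⁻¹ : GL (Fin n) ℂ) : Matrix (Fin n) (Fin n) ℂ).map (algebraMap ℂ (P n)) * genMat n *
      (((g⁻¹ : GL (Fin n) ℂ) : Matrix (Fin n) (Fin n) ℂ).map (algebraMap ℂ (P n)))ᵀ))
      v.1.1 v.1.2

/-- `Γ_k = Σ_{|I|=2k} Pf(x_I) Pf(∂_I)`. -/
def Gamma (n k : ℕ) : Module.End ℂ (P n) :=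
  ∑ I : {I : Finset (Fin n) // I.card = 2 * k},
    Pf (Matrix.of fun a b : Fin (2 * k) =>
        Mop n (I.1.orderIsoOfFin I.2 a) (I.1.orderIsoOfFin I.2 b)) *
      Pf (Matrix.of fun a b : Fin (2 * k) =>
        Dop n (I.1.orderIsoOfFin I.2 a) (I.1.orderIsoOfFin I.2 b))

/-
Write `M(u, v)` and `D(u, v)` for the bilinear extensions to `ℂⁿ` of `(eᵢ, eⱼ) ↦ Mᵢⱼ` and
`(eᵢ, eⱼ) ↦ Dᵢⱼ`. With `h = g⁻¹`, conjugation by `π(g)` turns `M(u, v)` into `M(ᵗh u, ᵗh v)` and,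
dually, `D(u, v)` into `D(g u, g v)`. The Pfaffians of the matrices `M(vₐ, v_b)` and `D(vₐ, v_b)`
are alternating multilinear forms `α`, `β` in `v`, and `Γ_k = ∑_I α(e_I) β(e_I)`. Up to the factor
`(2k)!` this is the sum over all `2k`-tuples of basis vectors, the canonical pairing of two tensors,
which does not change when `α` and `β` are transformed by the contragredient pair `ᵗh`, `g`.
-/

section SubsetSums

theorem bijective_orderEmbOfFin_comp_perm (ι : Type*) [LinearOrder ι] (m : ℕ) :
    Function.Bijective fun q : {I : Finset ι // I.card = m} × Equiv.Perm (Fin m) =>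
      (⟨q.1.1.orderEmbOfFin q.1.2 ∘ q.2, (q.1.1.orderEmbOfFin q.1.2).injective.comp q.2.injective⟩ :
        {f : Fin m → ι // f.Injective}) := by
  constructor
  · rintro ⟨⟨I, hI⟩, σ⟩ ⟨⟨J, hJ⟩, τ⟩ h
    have hcomp : I.orderEmbOfFin hI ∘ σ = J.orderEmbOfFin hJ ∘ τ := congrArg Subtype.val h
    obtain rfl : I = J := by
      simpa [σ.surjective.range_comp, τ.surjective.range_comp] using congrArg Set.range hcomp
    obtain rfl : σ = τ :=
      Equiv.ext fun a => (I.orderEmbOfFin hI).injective (congrFun hcomp a)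
    rfl
  · rintro ⟨f, hf⟩
    have hcard : (Finset.univ.image f).card = m := by
      rw [Finset.card_image_of_injective _ hf, Finset.card_fin]
    have hsort : f ∘ Tuple.sort f = (Finset.univ.image f).orderEmbOfFin hcard :=
      Finset.orderEmbOfFin_unique hcard (fun a => by simp)
        ((Tuple.monotone_sort f).strictMono_of_injective (hf.comp (Equiv.injective _)))
    refine ⟨(⟨_, hcard⟩, (Tuple.sort f)⁻¹), Subtype.ext (funext fun a => ?_)⟩
    simp [← hsort]

variable {ι : Type*} [Fintype ι] [LinearOrder ι] {m : ℕ}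

theorem sum_eq_factorial_nsmul_sum_orderEmbOfFin {N : Type*} [AddCommMonoid N]
    (F : (Fin m → ι) → N) (hF : ∀ f, ¬ f.Injective → F f = 0)
    (hperm : ∀ f (σ : Equiv.Perm (Fin m)), F (f ∘ σ) = F f) :
    ∑ f, F f = m.factorial • ∑ I : {I : Finset ι // I.card = m}, F (I.1.orderEmbOfFin I.2) := by
  classical
  calc ∑ f, F f = ∑ f with f.Injective, F f :=
        (Finset.sum_filter_of_ne fun f _ => not_imp_comm.mp (hF f)).symm
    _ = ∑ f : {f : Fin m → ι // f.Injective}, F f := Finset.sum_subtype _ (by simp) F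
    _ = ∑ q : {I : Finset ι // I.card = m} × Equiv.Perm (Fin m),
          F (q.1.1.orderEmbOfFin q.1.2 ∘ q.2) :=
        ((bijective_orderEmbOfFin_comp_perm ι m).sum_comp
          fun f : {f : Fin m → ι // f.Injective} => F f).symm
    _ = m.factorial • ∑ I : {I : Finset ι // I.card = m}, F (I.1.orderEmbOfFin I.2) := by
        simp only [hperm]
        rw [Fintype.sum_prod_type' fun (I : {I : Finset ι // I.card = m})
          (_ : Equiv.Perm (Fin m)) => F (I.1.orderEmbOfFin I.2)]
        simp only [Finset.sum_const, Finset.card_univ, Fintype.card_perm, Fintype.card_fin,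
          Finset.smul_sum]

theorem sum_alternating_mul_alternating {R A M N : Type*} [CommSemiring R] [Ring A] [Algebra R A]
    [AddCommMonoid M] [Module R M] [AddCommMonoid N] [Module R N]
    (α : M [⋀^Fin m]→ₗ[R] A) (β : N [⋀^Fin m]→ₗ[R] A) (u : ι → M) (w : ι → N) :
    ∑ f : Fin m → ι, α (u ∘ f) * β (w ∘ f) =
      m.factorial • ∑ I : {I : Finset ι // I.card = m},
        α (u ∘ I.1.orderEmbOfFin I.2) * β (w ∘ I.1.orderEmbOfFin I.2) := by
  refine sum_eq_factorial_nsmul_sum_orderEmbOfFin (fun f => α (u ∘ f) * β (w ∘ f)) ?_ ?_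
  · intro f hf
    rw [α.map_eq_zero_of_not_injective _ fun h => hf h.of_comp, zero_mul]
  · intro f σ
    rw [← Function.comp_assoc, ← Function.comp_assoc, α.map_perm, β.map_perm, smul_mul_smul_comm,
      Int.units_mul_self, one_smul]

end SubsetSums

section DualSums

variable {R ι ι' : Type*} [CommSemiring R] [Fintype ι] [Fintype ι']

section Multilinear

variable {κ A N : Type*} [Fintype κ] [DecidableEq κ] [DecidableEq ι] [DecidableEq ι'] [Semiring A]
  [Algebra R A] [AddCommMonoid N] [Module R N]

theorem multilinear_mulVec_single_eq_sum (α : MultilinearMap R (fun _ : κ => ι → R) N)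
    (B : Matrix ι ι' R) (f : κ → ι') :
    α (fun a => B *ᵥ Pi.single (f a) 1) =
      ∑ p : κ → ι, (∏ a, B (p a) (f a)) • α (fun a => Pi.single (p a) 1) := by
  have hcol (j : ι') : B *ᵥ Pi.single j 1 = ∑ i, B i j • (Pi.single i 1 : ι → R) := by
    rw [mulVec_single_one]
    exact pi_eq_sum_univ' (B.col j)
  simp only [hcol, α.map_sum, α.map_smul_univ]

theorem sum_mulVec_single_mul (α : MultilinearMap R (fun _ : κ => ι → R) A)
    (β : MultilinearMap R (fun _ : κ => ι' → R) A) (B : Matrix ι ι' R) :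
    ∑ f : κ → ι', α (fun a => B *ᵥ Pi.single (f a) 1) * β (fun a => Pi.single (f a) 1) =
      ∑ f : κ → ι, α (fun a => Pi.single (f a) 1) * β (fun a => Bᵀ *ᵥ Pi.single (f a) 1) := by
  simp only [multilinear_mulVec_single_eq_sum, Finset.sum_mul, Finset.mul_sum, smul_mul_assoc,
    mul_smul_comm, Matrix.transpose_apply]
  exact Finset.sum_comm

theorem sum_mulVec_single_mul_mulVec_single (α β : MultilinearMap R (fun _ : κ => ι → R) A)
    {B C : Matrix ι ι' R} (h : C * Bᵀ = 1) :
    ∑ f : κ → ι', α (fun a => B *ᵥ Pi.single (f a) 1) * β (fun a => C *ᵥ Pi.single (f a) 1) =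
      ∑ f : κ → ι, α (fun a => Pi.single (f a) 1) * β (fun a => Pi.single (f a) 1) := by
  simpa only [MultilinearMap.compLinearMap_apply, mulVecLin_apply, mulVec_mulVec, h, one_mulVec]
    using sum_mulVec_single_mul α (β.compLinearMap fun _ => C.mulVecLin) B

end Multilinear

theorem sum_orderEmbOfFin_mulVec_mul_mulVec {A : Type*} [Ring A] [Algebra R A]
    [IsAddTorsionFree A] [LinearOrder ι] [LinearOrder ι'] {m : ℕ}
    (α β : (ι → R) [⋀^Fin m]→ₗ[R] A) {B C : Matrix ι ι' R} (h : C * Bᵀ = 1) :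
    ∑ I : {I : Finset ι' // I.card = m},
        α (fun a => B *ᵥ Pi.single (I.1.orderEmbOfFin I.2 a) 1) *
          β (fun a => C *ᵥ Pi.single (I.1.orderEmbOfFin I.2 a) 1) =
      ∑ I : {I : Finset ι // I.card = m},
        α (fun a => Pi.single (I.1.orderEmbOfFin I.2 a) 1) *
          β (fun a => Pi.single (I.1.orderEmbOfFin I.2 a) 1) := by
  -- Multiplying by `m!` turns sums over `m`-subsets into sums over all `m`-tuples.
  refine nsmul_right_injective m.factorial_ne_zero ?_
  calc _ = _ := (sum_alternating_mul_alternating α β (fun i => B *ᵥ Pi.single i 1)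
          (fun i => C *ᵥ Pi.single i 1)).symm
    _ = _ := sum_mulVec_single_mul_mulVec_single α.toMultilinearMap β.toMultilinearMap h
    _ = _ := sum_alternating_mul_alternating α β (fun i => Pi.single i 1) (fun i => Pi.single i 1)

end DualSums

section PairProduct

variable {R V A : Type*} [CommSemiring R] [AddCommMonoid V] [Module R V] [Semiring A] [Algebra R A]

/-- A bilinear map `T`, regarded as a multilinear map in two variables indexed by `Fin 2`. -/
def uncurryBilin (T : V →ₗ[R] V →ₗ[R] A) : MultilinearMap R (fun _ : Fin 2 => V) A :=
  LinearMap.uncurryLeft (M := fun _ => V)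
    ((MultilinearMap.ofSubsingletonₗ R R V A (0 : Fin 1)).toLinearMap ∘ₗ T)

/-- The splitting of `{0, …, 2k - 1}` into the consecutive pairs `{2i, 2i + 1}`, `i < k`. -/
def pairIndexEquiv (k : ℕ) : (Σ _ : Fin k, Fin 2) ≃ Fin (2 * k) :=
  (Equiv.sigmaEquivProd _ _).trans (finProdFinEquiv.trans (finCongr (mul_comm k 2)))

/-- The multilinear map `v ↦ T (v₀, v₁) T (v₂, v₃) ⋯ T (v₂ₖ₋₂, v₂ₖ₋₁)`, the product taken in this
order; the Pfaffian is its antisymmetrization. -/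
def pairProd (T : V →ₗ[R] V →ₗ[R] A) (k : ℕ) : MultilinearMap R (fun _ : Fin (2 * k) => V) A :=
  ((MultilinearMap.mkPiAlgebraFin R k A).compMultilinearMap fun _ => uncurryBilin T).domDomCongr
    (pairIndexEquiv k)

theorem pairProd_apply (T : V →ₗ[R] V →ₗ[R] A) (k : ℕ) (v : Fin (2 * k) → V) :
    pairProd T k v = (List.ofFn fun i : Fin k =>
        T (v ⟨2 * (i : ℕ), by have := i.isLt; omega⟩)
          (v ⟨2 * (i : ℕ) + 1, by have := i.isLt; omega⟩)).prod := by
  have heven (i : Fin k) : pairIndexEquiv k ⟨i, 0⟩ = ⟨2 * (i : ℕ), by omega⟩ := by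
    simp [pairIndexEquiv, Fin.ext_iff]
  have hodd (i : Fin k) : pairIndexEquiv k ⟨i, 1⟩ = ⟨2 * (i : ℕ) + 1, by omega⟩ := by
    simp [pairIndexEquiv, Fin.ext_iff, add_comm]
  simp only [← heven, ← hodd]
  rfl

end PairProduct

section Pfaffian

variable {V A : Type*} [AddCommGroup V] [Module ℂ V] [Ring A] [Algebra ℂ A]

/-- The alternating form sending `v` to the Pfaffian of the matrix `T (vₐ, v_b)`, for a bilinear map
`T` which need not be alternating and whose values need not commute. -/
def pfaffianForm (T : V →ₗ[ℂ] V →ₗ[ℂ] A) (k : ℕ) : V [⋀^Fin (2 * k)]→ₗ[ℂ] A :=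
  ((2 : ℂ) ^ k * k.factorial)⁻¹ • MultilinearMap.alternatization (pairProd T k)

theorem pfaffianForm_apply (T : V →ₗ[ℂ] V →ₗ[ℂ] A) {k : ℕ} (v : Fin (2 * k) → V) :
    pfaffianForm T k v = Pf (Matrix.of fun a b => T (v a) (v b)) := by
  simp [pfaffianForm, Pf, MultilinearMap.alternatization_apply, pairProd_apply, Units.smul_def]

variable {A' : Type*} [Ring A'] [Algebra ℂ A'] (φ : A →ₐ[ℂ] A')

theorem map_Pf {k : ℕ} (B : Matrix (Fin (2 * k)) (Fin (2 * k)) A) :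
    φ (Pf B) = Pf (B.map φ) := by
  simp [Pf, map_list_prod, Function.comp_def, List.map_ofFn]

theorem map_pfaffianForm {V' : Type*} [AddCommGroup V'] [Module ℂ V'] {T : V →ₗ[ℂ] V →ₗ[ℂ] A}
    {T' : V' →ₗ[ℂ] V' →ₗ[ℂ] A'} {L : V → V'} (hφ : ∀ u v, φ (T u v) = T' (L u) (L v)) {k : ℕ}
    (v : Fin (2 * k) → V) : φ (pfaffianForm T k v) = pfaffianForm T' k (L ∘ v) := by
  simp only [pfaffianForm_apply, map_Pf]
  congr 1
  ext a b
  exact hφ _ _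

end Pfaffian

section BilinearForms

theorem ext_single_of_isAlt {R N ι : Type*} [CommRing R] [AddCommGroup N] [Module R N] [Finite ι]
    [LinearOrder ι] {S T : (ι → R) →ₗ[R] (ι → R) →ₗ[R] N} (hS : S.IsAlt) (hT : T.IsAlt)
    (h : ∀ i j, i < j → S (Pi.single i 1) (Pi.single j 1) = T (Pi.single i 1) (Pi.single j 1)) :
    S = T := by
  refine LinearMap.ext_basis (Pi.basisFun R ι) (Pi.basisFun R ι) fun i j => ?_
  simp only [Pi.basisFun_apply]
  rcases lt_trichotomy i j with hij | rfl | hij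
  · exact h i j hij
  · rw [hS, hT]
  · rw [← hS.neg, ← hT.neg, h j i hij]

theorem map_mul_mul_transpose_map_apply {R S ι κ : Type*} [CommSemiring R] [CommSemiring S]
    [Algebra R S] [Fintype ι] [DecidableEq ι] [Fintype κ] [DecidableEq κ] (A : Matrix κ ι R)
    (B : Matrix ι ι S) (i j : κ) :
    (A.map (algebraMap R S) * B * (A.map (algebraMap R S))ᵀ) i j =
      Matrix.toLinearMap₂' R B (Aᵀ *ᵥ Pi.single i 1) (Aᵀ *ᵥ Pi.single j 1) := by
  simp only [Matrix.toLinearMap₂'_apply, mul_apply, map_apply, transpose_apply,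
    Finset.sum_mul, mulVec_single_one, Algebra.smul_def, col_apply]
  rw [Finset.sum_comm]
  refine Finset.sum_congr rfl fun a _ => Finset.sum_congr rfl fun b _ => ?_
  ring

section WedgePairing

variable {R ι κ : Type*} [CommRing R] [Fintype ι] [Fintype κ]

/-- The alternating form `(a, b) ↦ (u ⬝ a)(v ⬝ b) - (v ⬝ a)(u ⬝ b)`, that is, the pairing of
`u ∧ v` with `a ∧ b`. -/
def wedgePairing (u v : ι → R) : (ι → R) →ₗ[R] (ι → R) →ₗ[R] R :=
  (LinearMap.mul R R).compl₁₂ (dotProductBilin R R u) (dotProductBilin R R v) -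
    (LinearMap.mul R R).compl₁₂ (dotProductBilin R R v) (dotProductBilin R R u)

theorem wedgePairing_apply (u v a b : ι → R) :
    wedgePairing u v a b = (u ⬝ᵥ a) * (v ⬝ᵥ b) - (v ⬝ᵥ a) * (u ⬝ᵥ b) := rfl

theorem wedgePairing_isAlt (u v : ι → R) : (wedgePairing u v).IsAlt := fun a => by
  rw [wedgePairing_apply, mul_comm, sub_self]

theorem wedgePairing_mulVec (A : Matrix κ ι R) (u v : ι → R) (a b : κ → R) :
    wedgePairing (A *ᵥ u) (A *ᵥ v) a b = wedgePairing u v (Aᵀ *ᵥ a) (Aᵀ *ᵥ b) := by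
  simp only [wedgePairing_apply, dotProduct_mulVec, vecMul_transpose]

end WedgePairing

end BilinearForms

theorem derivation_algHom_eq_algHom_derivation {R σ B : Type*} [CommSemiring R] [CommSemiring B]
    [Algebra R B] (φ : MvPolynomial σ R →ₐ[R] B) (D : Derivation R B B)
    (D' : Derivation R (MvPolynomial σ R) (MvPolynomial σ R))
    (h : ∀ i, D (φ (X i)) = φ (D' (X i))) (f : MvPolynomial σ R) : D (φ f) = φ (D' f) := by
  induction f using MvPolynomial.induction_on with
  | C a => rw [← algebraMap_eq, φ.commutes, D.map_algebraMap, D'.map_algebraMap, map_zero]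
  | add p q hp hq => simp only [map_add, hp, hq]
  | mul_X p i hp => simp only [map_mul, Derivation.leibniz, smul_eq_mul, map_add, hp, h]

section Operators

variable {n : ℕ}

/-- The generic alternating form: the bilinear extension of `(eᵢ, eⱼ) ↦ xᵢⱼ`. -/
def genericForm (n : ℕ) : (Fin n → ℂ) →ₗ[ℂ] (Fin n → ℂ) →ₗ[ℂ] P n :=
  Matrix.toLinearMap₂' ℂ (genMat n)

theorem transpose_genMat (n : ℕ) : (genMat n)ᵀ = -genMat n := by
  ext1 i j
  rcases lt_trichotomy i j with h | rfl | h <;> simp [genMat, *, not_lt_of_gt]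

theorem genericForm_single (i j : Fin n) :
    genericForm n (Pi.single i 1) (Pi.single j 1) = genMat n i j := by
  simp [genericForm, Matrix.toLinearMap₂'_apply, Pi.single_apply]

theorem genericForm_single_of_lt (p : Idx n) :
    genericForm n (Pi.single p.1.1 1) (Pi.single p.1.2 1) = X p := by
  simp [genericForm_single, genMat, p.2]

theorem genericForm_isAlt (n : ℕ) : (genericForm n).IsAlt := by
  intro u
  have hswap (i j : Fin n) : genMat n j i = -genMat n i j := congrFun₂ (transpose_genMat n) i j
  rw [← self_eq_neg]
  simp only [genericForm, Matrix.toLinearMap₂'_apply, ← Finset.sum_neg_distrib]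
  rw [Finset.sum_comm]
  refine Finset.sum_congr rfl fun i _ => Finset.sum_congr rfl fun j _ => ?_
  rw [hswap, smul_neg, smul_neg, smul_comm]

theorem piHom_X (g : GL (Fin n) ℂ) (p : Idx n) :
    piHom n g (X p) =
      genericForm n ((g⁻¹).1ᵀ *ᵥ Pi.single p.1.1 1) ((g⁻¹).1ᵀ *ᵥ Pi.single p.1.2 1) :=
  (aeval_X _ _).trans (map_mul_mul_transpose_map_apply _ _ _ _)

theorem piHom_genericForm (g : GL (Fin n) ℂ) (u v : Fin n → ℂ) :
    piHom n g (genericForm n u v) = genericForm n ((g⁻¹).1ᵀ *ᵥ u) ((g⁻¹).1ᵀ *ᵥ v) := by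
  have h : (genericForm n).compr₂ (piHom n g).toLinearMap =
      (genericForm n).compl₁₂ ((g⁻¹).1ᵀ.mulVecLin) ((g⁻¹).1ᵀ.mulVecLin) := by
    refine ext_single_of_isAlt (fun u => ?_) (fun u => ?_) fun i j hij => ?_
    · rw [LinearMap.compr₂_apply, genericForm_isAlt n u, map_zero]
    · exact genericForm_isAlt n ((g⁻¹).1ᵀ *ᵥ u)
    · rw [LinearMap.compr₂_apply, genericForm_single_of_lt ⟨(i, j), hij⟩]
      exact piHom_X g ⟨(i, j), hij⟩
  exact LinearMap.congr_fun₂ h u v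

theorem piHom_comp_piHom_inv (g : GL (Fin n) ℂ) :
    (piHom n g).comp (piHom n g⁻¹) = AlgHom.id ℂ (P n) := by
  refine algHom_ext fun p => ?_
  have hmul : (g⁻¹).1ᵀ * g.1ᵀ = 1 := by rw [← transpose_mul, Units.mul_inv, transpose_one]
  rw [← genericForm_single_of_lt, AlgHom.comp_apply, piHom_genericForm, piHom_genericForm, inv_inv]
  simp only [mulVec_mulVec, hmul, one_mulVec, AlgHom.id_apply]

/-- `π(g)` as an algebra automorphism, with inverse `π(g⁻¹)`. -/
def piEquiv (g : GL (Fin n) ℂ) : P n ≃ₐ[ℂ] P n :=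
  AlgEquiv.ofAlgHom (piHom n g) (piHom n g⁻¹) (piHom_comp_piHom_inv g)
    (by simpa only [inv_inv] using piHom_comp_piHom_inv g⁻¹)

/-- Conjugation by `π(g)`, as an algebra automorphism of `End P`. -/
def conjPi (g : GL (Fin n) ℂ) : Module.End ℂ (P n) ≃ₐ[ℂ] Module.End ℂ (P n) :=
  (piEquiv g).toLinearEquiv.conjAlgEquiv ℂ

theorem conjPi_apply (g : GL (Fin n) ℂ) (T : Module.End ℂ (P n)) :
    conjPi g T = (piHom n g).toLinearMap ∘ₗ T ∘ₗ (piHom n g⁻¹).toLinearMap := rfl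

/-- The bilinear extension of `(eᵢ, eⱼ) ↦ Mᵢⱼ`. -/
def mulForm (n : ℕ) : (Fin n → ℂ) →ₗ[ℂ] (Fin n → ℂ) →ₗ[ℂ] Module.End ℂ (P n) :=
  (genericForm n).compr₂ (LinearMap.mul ℂ (P n))

theorem mulForm_single (i j : Fin n) : mulForm n (Pi.single i 1) (Pi.single j 1) = Mop n i j := by
  simp only [mulForm, LinearMap.compr₂_apply, genericForm_single, genMat, Mop, of_apply]
  split_ifs
  · rfl
  · exact map_neg _ _
  · exact map_zero _

theorem conjPi_mulForm (g : GL (Fin n) ℂ) (u v : Fin n → ℂ) :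
    conjPi g (mulForm n u v) = mulForm n ((g⁻¹).1ᵀ *ᵥ u) ((g⁻¹).1ᵀ *ᵥ v) := by
  simp only [mulForm, LinearMap.compr₂_apply, ← piHom_genericForm]
  exact (piEquiv g).linearEquivConj_mulLeft (genericForm n u v)

/-- The derivation `∂_{u ∧ v}` of `P`, depending bilinearly on `(u, v)`: the one sending `xᵢⱼ` to
`uᵢvⱼ - uⱼvᵢ`. -/
def wedgeDerivation (n : ℕ) :
    (Fin n → ℂ) →ₗ[ℂ] (Fin n → ℂ) →ₗ[ℂ] Derivation ℂ (P n) (P n) :=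
  (LinearMap.mk₂ ℂ
    (fun u v (p : Idx n) => algebraMap ℂ (P n) (u p.1.1 * v p.1.2 - u p.1.2 * v p.1.1))
    (fun u u' v => by ext1; simp only [Pi.add_apply, map_sub, map_mul, map_add]; ring)
    (fun c u v => by
      ext1
      simp only [Pi.smul_apply, Algebra.smul_def, map_sub, map_mul, Algebra.algebraMap_self_apply]
      ring)
    (fun u v v' => by ext1; simp only [Pi.add_apply, map_sub, map_mul, map_add]; ring)
    (fun c u v => by
      ext1
      simp only [Pi.smul_apply, Algebra.smul_def, map_sub, map_mul, Algebra.algebraMap_self_apply]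
      ring)).compr₂
    (mkDerivationEquiv ℂ).toLinearMap

theorem wedgeDerivation_X (u v : Fin n → ℂ) (p : Idx n) :
    wedgeDerivation n u v (X p) =
      algebraMap ℂ (P n) (u p.1.1 * v p.1.2 - u p.1.2 * v p.1.1) :=
  mkDerivation_X _ _ _

theorem wedgeDerivation_isAlt (n : ℕ) : (wedgeDerivation n).IsAlt := by
  intro u
  refine derivation_ext fun p => ?_
  simp [wedgeDerivation_X, mul_comm]

theorem wedgeDerivation_single_of_lt (p : Idx n) :
    wedgeDerivation n (Pi.single p.1.1 1) (Pi.single p.1.2 1) = pderiv p := by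
  refine derivation_ext fun q => ?_
  rw [wedgeDerivation_X, pderiv_X]
  obtain ⟨⟨i, j⟩, hij⟩ := p
  obtain ⟨⟨a, b⟩, hab⟩ := q
  simp only [Pi.single_apply, Subtype.mk.injEq, Prod.mk.injEq]
  -- The second product vanishes: `a = j` and `b = i` would contradict `i < j` and `a < b`.
  split_ifs <;> simp <;> grind

theorem wedgeDerivation_genericForm (u v a b : Fin n → ℂ) :
    wedgeDerivation n u v (genericForm n a b) = algebraMap ℂ (P n) (wedgePairing u v a b) := by
  have h : (genericForm n).compr₂ (wedgeDerivation n u v).toLinearMap =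
      (wedgePairing u v).compr₂ (Algebra.linearMap ℂ (P n)) := by
    refine ext_single_of_isAlt (fun a => ?_) (fun a => ?_) fun i j hij => ?_
    · simp [genericForm_isAlt n a]
    · simp [wedgePairing_isAlt u v a]
    · rw [LinearMap.compr₂_apply, genericForm_single_of_lt ⟨(i, j), hij⟩]
      simp [wedgeDerivation_X, wedgePairing_apply, mul_comm]
  exact LinearMap.congr_fun₂ h a b

/-- The bilinear extension of `(eᵢ, eⱼ) ↦ Dᵢⱼ`; its value at `(u, v)` is `∂_{u ∧ v}`. -/
def derivForm (n : ℕ) : (Fin n → ℂ) →ₗ[ℂ] (Fin n → ℂ) →ₗ[ℂ] Module.End ℂ (P n) :=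
  (wedgeDerivation n).compr₂
    { toFun := (↑), map_add' := fun _ _ => rfl, map_smul' := fun _ _ => rfl }

theorem derivForm_single (i j : Fin n) :
    derivForm n (Pi.single i 1) (Pi.single j 1) = Dop n i j := by
  change (wedgeDerivation n (Pi.single i 1) (Pi.single j 1) : P n →ₗ[ℂ] P n) = _
  unfold Dop
  split_ifs with h h'
  · rw [wedgeDerivation_single_of_lt ⟨(i, j), h⟩]
  · rw [← (wedgeDerivation_isAlt n).neg, wedgeDerivation_single_of_lt ⟨(j, i), h'⟩,
      Derivation.coe_neg_linearMap]
  · obtain rfl : i = j := le_antisymm (not_lt.mp h') (not_lt.mp h)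
    rw [wedgeDerivation_isAlt n, Derivation.coe_zero_linearMap]

theorem conjPi_derivForm (g : GL (Fin n) ℂ) (u v : Fin n → ℂ) :
    conjPi g (derivForm n u v) = derivForm n (g.1 *ᵥ u) (g.1 *ᵥ v) := by
  refine LinearMap.ext fun f => ?_
  have hcomm : wedgeDerivation n u v (piHom n g⁻¹ f) =
      piHom n g⁻¹ (wedgeDerivation n (g.1 *ᵥ u) (g.1 *ᵥ v) f) := by
    refine derivation_algHom_eq_algHom_derivation _ _ _ (fun p => ?_) f
    rw [← genericForm_single_of_lt, piHom_genericForm, wedgeDerivation_genericForm,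
      wedgeDerivation_genericForm, AlgHom.commutes, inv_inv, wedgePairing_mulVec]
  calc conjPi g (derivForm n u v) f = piHom n g (wedgeDerivation n u v (piHom n g⁻¹ f)) := rfl
    _ = derivForm n (g.1 *ᵥ u) (g.1 *ᵥ v) f := by
      rw [hcomm]; exact (piEquiv g).apply_symm_apply _

theorem Gamma_eq_sum (n k : ℕ) : Gamma n k =
    ∑ I : {I : Finset (Fin n) // I.card = 2 * k},
      pfaffianForm (mulForm n) k (fun a => Pi.single (I.1.orderEmbOfFin I.2 a) 1) *
        pfaffianForm (derivForm n) k (fun a => Pi.single (I.1.orderEmbOfFin I.2 a) 1) := by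
  simp only [pfaffianForm_apply, mulForm_single, derivForm_single]
  rfl

end Operators

/-- Each `Γ_k` is `GL_n`-invariant: `π(g) ∘ Γ_k ∘ π(g)⁻¹ = Γ_k`. -/
theorem Gamma_invariant (n : ℕ) (hn : 1 ≤ n) (g : GL (Fin n) ℂ) (k : ℕ) (hk : k ≤ n / 2) :
    (piHom n g).toLinearMap ∘ₗ Gamma n k ∘ₗ (piHom n g⁻¹).toLinearMap = Gamma n k := by
  have hdual : g.1 * (g⁻¹).1ᵀᵀ = 1 := by simp
  have : IsAddTorsionFree (Module.End ℂ (P n)) := .of_isTorsionFree ℂ _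
  rw [← conjPi_apply, Gamma_eq_sum]
  simp only [map_sum, map_mul]
  rw [← sum_orderEmbOfFin_mulVec_mul_mulVec _ _ hdual]
  refine Finset.sum_congr rfl fun I _ => ?_
  exact congrArg₂ (· * ·) (map_pfaffianForm (conjPi g).toAlgHom (conjPi_mulForm g) _)
    (map_pfaffianForm (conjPi g).toAlgHom (conjPi_derivForm g) _)

end
end
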